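/- arXiv:1711.08173 — 2 statements merged into one kernel-verified Lean document; each statement's English description precedes it below -/
import Mathlib

section
/- Suppose e ∈ ℕ and a₁, …, a₆ ∈ ℕ satisfy aᵢ ≤ 4 for all i, 3e = 4 + (a₁ + ⋯ + a₆), and p(e, a) ≥ 0. Then 2 ≤ e ≤ 9, p(e, a) ∈ {0, 1}, and the pair (e, {a₁, …, a₆}) (where {a₁, …, a₆} is the multiset of the aᵢ) is one of the following nine pairs, with the indicated value of p: (2, {0,0,0,0,1,1}), p = 0; (3, {0,0,1,1,1,2}), p = 0; (3, {0,1,1,1,1,1}), p = 1; (4, {0,1,1,2,2,2}), p = 0; (4, {1,1,1,1,1,3}), p = 0; (4, {1,1,1,1,2,2}), p = 1; (5, {1,1,2,2,2,3}), p = 0; (5, {1,2,2,2,2,2}), p = 1; (6, {2,2,2,2,3,3}), p = 0. -/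
/-- The arithmetic genus `p(e, a) = (e-1)(e-2)/2 - Σᵢ aᵢ(aᵢ-1)/2` of a curve of class
`e·g*H - Σ aᵢEᵢ` on a smooth cubic surface presented as a blow-up of `ℙ²` in six points. -/
def paGenus (e : ℕ) (a : Fin 6 → ℕ) : ℤ :=
  ((e : ℤ) - 1) * ((e : ℤ) - 2) / 2 - ∑ i, (a i : ℤ) * ((a i : ℤ) - 1) / 2

/-- The genus, computed from the list of multiplicities. -/
def listGenus (e : ℕ) (l : List ℕ) : ℤ :=
  ((e : ℤ) - 1) * ((e : ℤ) - 2) / 2 - (l.map fun x : ℕ => (x : ℤ) * ((x : ℤ) - 1) / 2).sum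

/-- The classification for an explicit list. -/
def ListClass (e : ℕ) (l : List ℕ) : Prop :=
    ((e = 2 ∧ l = [0,0,0,0,1,1] ∧ listGenus e l = 0) ∨
     (e = 3 ∧ l = [0,0,1,1,1,2] ∧ listGenus e l = 0) ∨
     (e = 3 ∧ l = [0,1,1,1,1,1] ∧ listGenus e l = 1) ∨
     (e = 4 ∧ l = [0,1,1,2,2,2] ∧ listGenus e l = 0) ∨
     (e = 4 ∧ l = [1,1,1,1,1,3] ∧ listGenus e l = 0) ∨
     (e = 4 ∧ l = [1,1,1,1,2,2] ∧ listGenus e l = 1) ∨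
     (e = 5 ∧ l = [1,1,2,2,2,3] ∧ listGenus e l = 0) ∨
     (e = 5 ∧ l = [1,2,2,2,2,2] ∧ listGenus e l = 1) ∨
     (e = 6 ∧ l = [2,2,2,2,3,3] ∧ listGenus e l = 0))

instance (e : ℕ) (l : List ℕ) : Decidable (ListClass e l) := by
  unfold ListClass; infer_instance

set_option maxRecDepth 100000 in
theorem sorted_check : ∀ x₀ ∈ List.range 5, ∀ x₁ ∈ List.range 5, x₀ ≤ x₁ → ∀ x₂ ∈ List.range 5, x₁ ≤ x₂ → ∀ x₃ ∈ List.range 5, x₂ ≤ x₃ →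
    ∀ x₄ ∈ List.range 5, x₃ ≤ x₄ → ∀ x₅ ∈ List.range 5, x₄ ≤ x₅ →
    (4 + (x₀ + x₁ + x₂ + x₃ + x₄ + x₅)) % 3 = 0 →
    0 ≤ listGenus ((4 + (x₀ + x₁ + x₂ + x₃ + x₄ + x₅)) / 3) [x₀, x₁, x₂, x₃, x₄, x₅] →
    ListClass ((4 + (x₀ + x₁ + x₂ + x₃ + x₄ + x₅)) / 3) [x₀, x₁, x₂, x₃, x₄, x₅] := by
  decide +kernel

theorem exists_sorted_list (a : Fin 6 → ℕ) :
    ∃ l : List ℕ, l.Pairwise (· ≤ ·) ∧ Multiset.map a Finset.univ.val = (l : Multiset ℕ) :=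
  ⟨(Multiset.map a Finset.univ.val).sort (· ≤ ·), Multiset.pairwise_sort _ _,
    (Multiset.sort_eq _ _).symm⟩

/-- Classification (Lemma 4.5 of the paper): if `aᵢ ≤ 4`, `3e = 4 + Σ aᵢ` and
`p(e, a) ≥ 0`, then `2 ≤ e ≤ 9`, `p(e, a) ∈ {0, 1}`, and the pair
`(e, [a₁, …, a₆])` (with the `aᵢ` taken as a multiset) is one of nine explicit pairs. -/
theorem quartic_class_classification (e : ℕ) (a : Fin 6 → ℕ)
    (ha : ∀ i, a i ≤ 4)
    (hsum : 3 * e = 4 + ∑ i, a i)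
    (hp : 0 ≤ paGenus e a) :
    (2 ≤ e ∧ e ≤ 9) ∧ (paGenus e a = 0 ∨ paGenus e a = 1) ∧
    ((e = 2 ∧ Multiset.map a Finset.univ.val = {0,0,0,0,1,1} ∧ paGenus e a = 0) ∨
     (e = 3 ∧ Multiset.map a Finset.univ.val = {0,0,1,1,1,2} ∧ paGenus e a = 0) ∨
     (e = 3 ∧ Multiset.map a Finset.univ.val = {0,1,1,1,1,1} ∧ paGenus e a = 1) ∨
     (e = 4 ∧ Multiset.map a Finset.univ.val = {0,1,1,2,2,2} ∧ paGenus e a = 0) ∨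
     (e = 4 ∧ Multiset.map a Finset.univ.val = {1,1,1,1,1,3} ∧ paGenus e a = 0) ∨
     (e = 4 ∧ Multiset.map a Finset.univ.val = {1,1,1,1,2,2} ∧ paGenus e a = 1) ∨
     (e = 5 ∧ Multiset.map a Finset.univ.val = {1,1,2,2,2,3} ∧ paGenus e a = 0) ∨
     (e = 5 ∧ Multiset.map a Finset.univ.val = {1,2,2,2,2,2} ∧ paGenus e a = 1) ∨
     (e = 6 ∧ Multiset.map a Finset.univ.val = {2,2,2,2,3,3} ∧ paGenus e a = 0)) := by
  obtain ⟨l, hl, hal⟩ := exists_sorted_list a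
  have hlen : l.length = 6 := by
    have := congrArg Multiset.card hal
    simpa using this.symm
  have hmem : ∀ x ∈ l, x < 5 := by
    intro x hx
    have hx' : x ∈ Multiset.map a Finset.univ.val := by rw [hal]; exact hx
    obtain ⟨i, -, rfl⟩ := Multiset.mem_map.1 hx'
    have := ha i
    omega
  have hs : ∑ i, a i = l.sum := by
    rw [Finset.sum_eq_multiset_sum, hal, Multiset.sum_coe]
  have hg : paGenus e a = listGenus e l := by
    unfold paGenus listGenus
    have h2 : ∑ i, (a i : ℤ) * ((a i : ℤ) - 1) / 2
        = ((Multiset.map a Finset.univ.val).map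
            fun x : ℕ => (x : ℤ) * ((x : ℤ) - 1) / 2).sum := by
      rw [Multiset.map_map]; rfl
    rw [h2, hal, Multiset.map_coe, Multiset.sum_coe]
  have key : ListClass e l := by
    rw [hg] at hp
    match l, hlen with
    | [x₀, x₁, x₂, x₃, x₄, x₅], _ =>
      simp only [List.sum_cons, List.sum_nil] at hs
      simp only [List.pairwise_cons, List.mem_cons, forall_eq_or_imp] at hl
      simp only [List.mem_cons, forall_eq_or_imp] at hmem
      obtain ⟨m0, m1, m2, m3, m4, m5, -⟩ := hmem
      have he : e = (4 + (x₀ + x₁ + x₂ + x₃ + x₄ + x₅)) / 3 := by omega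
      rw [he] at hp ⊢
      exact sorted_check x₀ (List.mem_range.2 m0) x₁ (List.mem_range.2 m1) hl.1.1 x₂ (List.mem_range.2 m2) hl.2.1.1 x₃ (List.mem_range.2 m3) hl.2.2.1.1 x₄ (List.mem_range.2 m4)
        hl.2.2.2.1.1 x₅ (List.mem_range.2 m5) hl.2.2.2.2.1.1 (by omega) hp
  rw [hg, hal]
  rcases key with h | h | h | h | h | h | h | h | h <;>
  · obtain ⟨rfl, rfl, h⟩ := h
    refine ⟨⟨by norm_num, by norm_num⟩, by simp [h], ?_⟩
    rw [h]
    decide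
end

section
/- The number of pairs (e, (a₁, …, a₆)) with e ∈ ℕ and (a₁, …, a₆) an ordered 6-tuple of natural numbers satisfying aᵢ ≤ 4 for all i, 3e = 4 + (a₁ + ⋯ + a₆), and p(e, a) = 0 is exactly 216; the number of such pairs with p(e, a) = 1 instead is exactly 27. -/
/-- The set of admissible classes with genus `k`, as a filtered finite box. -/
def quarticBox (k : ℕ) : Finset (ℕ × ℕ × ℕ × ℕ × ℕ × ℕ) :=
  (Finset.range 5 ×ˢ Finset.range 5 ×ˢ Finset.range 5 ×ˢ Finset.range 5 ×ˢ
    Finset.range 5 ×ˢ Finset.range 5).filter fun t =>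
    (4 + (t.1 + t.2.1 + t.2.2.1 + t.2.2.2.1 + t.2.2.2.2.1 + t.2.2.2.2.2)) % 3 = 0 ∧
    ((4 + (t.1 + t.2.1 + t.2.2.1 + t.2.2.2.1 + t.2.2.2.2.1 + t.2.2.2.2.2)) / 3 - 1) *
      ((4 + (t.1 + t.2.1 + t.2.2.1 + t.2.2.2.1 + t.2.2.2.2.1 + t.2.2.2.2.2)) / 3 - 2) =
    t.1 * (t.1 - 1) + t.2.1 * (t.2.1 - 1) + t.2.2.1 * (t.2.2.1 - 1) +
      t.2.2.2.1 * (t.2.2.2.1 - 1) + t.2.2.2.2.1 * (t.2.2.2.2.1 - 1) +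
      t.2.2.2.2.2 * (t.2.2.2.2.2 - 1) + 2 * k

/-- The pair `(e, a)` attached to a 6-tuple. -/
def quarticMap (t : ℕ × ℕ × ℕ × ℕ × ℕ × ℕ) : ℕ × (Fin 6 → ℕ) :=
  ((4 + (t.1 + t.2.1 + t.2.2.1 + t.2.2.2.1 + t.2.2.2.2.1 + t.2.2.2.2.2)) / 3,
    ![t.1, t.2.1, t.2.2.1, t.2.2.2.1, t.2.2.2.2.1, t.2.2.2.2.2])

theorem quarticMap_injective : Function.Injective quarticMap := by
  rintro ⟨a, b, c, d, e, f⟩ ⟨a', b', c', d', e', f'⟩ h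
  have h2 := congrArg Prod.snd h
  have h3 := fun i => congrFun h2 i
  have := h3 0
  have := h3 1
  have := h3 2
  have := h3 3
  have := h3 4
  have := h3 5
  simp_all [quarticMap]

theorem cast_mul_pred (n : ℕ) : ((n * (n - 1) : ℕ) : ℤ) = (n : ℤ) * ((n : ℤ) - 1) := by
  cases n <;> simp

theorem two_mul_half (z : ℤ) : 2 * (z * (z - 1) / 2) = z * (z - 1) :=
  Int.mul_ediv_cancel' (Int.even_mul_pred_self z).two_dvd

theorem paGenus_iff (e k : ℕ) (a : Fin 6 → ℕ) (he : 2 ≤ e) :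
    paGenus e a = k ↔ (e - 1) * (e - 2) = a 0 * (a 0 - 1) + a 1 * (a 1 - 1) +
      a 2 * (a 2 - 1) + a 3 * (a 3 - 1) + a 4 * (a 4 - 1) + a 5 * (a 5 - 1) + 2 * k := by
  have hE : (((e - 1) * (e - 2) : ℕ) : ℤ) = ((e : ℤ) - 1) * ((e : ℤ) - 2) := by
    obtain ⟨m, rfl⟩ := Nat.exists_eq_add_of_le he
    have h1 : 2 + m - 1 = m + 1 := by omega
    have h2 : 2 + m - 2 = m := by omega
    rw [h1, h2]; push_cast; ring
  have hE2 := two_mul_half ((e : ℤ) - 1)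
  rw [show (e : ℤ) - 1 - 1 = e - 2 by ring] at hE2
  rw [← @Nat.cast_inj ℤ, Nat.cast_add, Nat.cast_add, Nat.cast_add, Nat.cast_add,
    Nat.cast_add, Nat.cast_add, hE]
  simp only [cast_mul_pred, paGenus, Fin.sum_univ_six]
  have h0 := two_mul_half (a 0)
  have h1 := two_mul_half (a 1)
  have h2 := two_mul_half (a 2)
  have h3 := two_mul_half (a 3)
  have h4 := two_mul_half (a 4)
  have h5 := two_mul_half (a 5)
  push_cast
  constructor <;> intro h <;> linarith

theorem quartic_set_eq (k : ℕ) :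
    {x : ℕ × (Fin 6 → ℕ) |
      (∀ i, x.2 i ≤ 4) ∧ 3 * x.1 = 4 + ∑ i, x.2 i ∧ paGenus x.1 x.2 = k} =
    quarticMap '' (quarticBox k : Set (ℕ × ℕ × ℕ × ℕ × ℕ × ℕ)) := by
  ext ⟨e, a⟩
  simp only [Set.mem_ofPred_eq, Set.mem_image, Finset.mem_coe]
  constructor
  · rintro ⟨hle, hs, hp⟩
    rw [Fin.sum_univ_six] at hs
    rw [paGenus_iff e k a (by omega)] at hp
    have he : (4 + (a 0 + a 1 + a 2 + a 3 + a 4 + a 5)) / 3 = e := by omega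
    refine ⟨(a 0, a 1, a 2, a 3, a 4, a 5), ?_, ?_⟩
    · simp only [quarticBox, Finset.mem_filter, Finset.mem_product, Finset.mem_range, he]
      refine ⟨?_, by omega, hp⟩
      have := hle 0
      have := hle 1
      have := hle 2
      have := hle 3
      have := hle 4
      have := hle 5
      omega
    · refine Prod.ext he ?_
      funext i
      fin_cases i <;> rfl
  · rintro ⟨⟨b0, b1, b2, b3, b4, b5⟩, hb, h⟩
    simp only [quarticBox, Finset.mem_filter, Finset.mem_product, Finset.mem_range] at hb
    obtain ⟨hlt, hmod, hp⟩ := hb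
    simp only [quarticMap, Prod.mk.injEq] at h
    obtain ⟨rfl, rfl⟩ := h
    refine ⟨?_, ?_, ?_⟩
    · intro i
      fin_cases i <;> simp <;> omega
    · simp [Fin.sum_univ_six]
      omega
    · rw [paGenus_iff _ _ _ (by omega)]
      exact hp

theorem quartic_ncard (k : ℕ) :
    {x : ℕ × (Fin 6 → ℕ) |
      (∀ i, x.2 i ≤ 4) ∧ 3 * x.1 = 4 + ∑ i, x.2 i ∧ paGenus x.1 x.2 = k}.ncard =
    (quarticBox k).card := by
  rw [quartic_set_eq, Set.ncard_image_of_injective _ quarticMap_injective,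
    Set.ncard_coe_finset]

theorem quarticBox_zero : (quarticBox 0).card = 216 := by
  decide +kernel

theorem quarticBox_one : (quarticBox 1).card = 27 := by
  decide +kernel

/-- There are exactly `216` pairs `(e, (a₁, …, a₆))` with ordered tuples satisfying
`aᵢ ≤ 4`, `3e = 4 + Σ aᵢ` and `p(e, a) = 0`, and exactly `27` such pairs with
`p(e, a) = 1`. -/
theorem quartic_class_count :
    {x : ℕ × (Fin 6 → ℕ) |
      (∀ i, x.2 i ≤ 4) ∧ 3 * x.1 = 4 + ∑ i, x.2 i ∧ paGenus x.1 x.2 = 0}.ncard = 216 ∧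
    {x : ℕ × (Fin 6 → ℕ) |
      (∀ i, x.2 i ≤ 4) ∧ 3 * x.1 = 4 + ∑ i, x.2 i ∧ paGenus x.1 x.2 = 1}.ncard = 27 := by
  have h0 := quartic_ncard 0
  have h1 := quartic_ncard 1
  rw [quarticBox_zero] at h0
  rw [quarticBox_one] at h1
  exact ⟨by exact_mod_cast h0, by exact_mod_cast h1⟩
end
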